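/- Let T = (T_n)_{n≥1} be a family of functions T_n : ℕ^n → ℚ such that: (i) each T_n is symmetric, i.e. invariant under permutations of its arguments; (ii) T_1(1) = 1/24; (iii) the string equation holds: for every n ≥ 1 and every (m_1,…,m_n) ∈ ℕ^n, T_{n+1}(0, m_1,…,m_n) = ∑_{j : m_j ≥ 1} T_n(m_1,…,m_j − 1,…,m_n); (iv) the dilaton equation holds: for every n ≥ 1 and every (m_1,…,m_n) ∈ ℕ^n, T_{n+1}(1, m_1,…,m_n) = n · T_n(m_1,…,m_n). Then for every n ≥ 1 and every (m_1,…,m_n) ∈ ℕ^n with m_1 + ⋯ + m_n = n one has T_n(m_1,…,m_n) = α_n(m_1,…,m_n), where α_r(y_1,…,y_r) = (1/(24 · y_1!⋯y_r!)) · ( r! − ∑_{i=2}^{r} (i−2)! (r−i)! e_i(y_1,…,y_r) ) and e_i denotes the i-th elementary symmetric polynomial e_i(y) = ∑_{S ⊆ {1,…,r}, |S| = i} ∏_{l ∈ S} y_l. -/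

import Mathlib

open Finset

/-- The `i`-th elementary symmetric polynomial of `y_1, …, y_r ∈ ℕ`, as a rational
number: `e_i(y) = ∑_{S ⊆ {1,…,r}, |S| = i} ∏_{l ∈ S} y_l`. -/
def esymmQ (r i : ℕ) (y : Fin r → ℕ) : ℚ :=
  ∑ S ∈ Finset.powersetCard i (Finset.univ : Finset (Fin r)), ∏ l ∈ S, (y l : ℚ)

/-- `α_r(y_1,…,y_r) = (1/(24 · y_1!⋯y_r!)) · ( r! − ∑_{i=2}^{r} (i−2)! (r−i)! e_i(y) )`. -/
def alphaCoeff (r : ℕ) (y : Fin r → ℕ) : ℚ :=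
  (1 / (24 * ∏ l, (Nat.factorial (y l) : ℚ))) *
    ((Nat.factorial r : ℚ) -
      ∑ i ∈ Finset.Icc 2 r,
        (Nat.factorial (i - 2) : ℚ) * (Nat.factorial (r - i) : ℚ) * esymmQ r i y)

/-!
The formula solves the string and dilaton equations on tuples with `∑ mᵢ = n`, and there is only
one solution with a given value at `(1)`: a tuple of `n` natural numbers summing to `n` has an entry
equal to `0` or `1`, which symmetry moves to the front, where one of the two equations reduces the
number of entries.

For the formula, clear the denominator `24 ∏ mᵢ!`. The numerator is the image of
`Kⁿ - ∑ᵢ (i - 2)! eᵢ Kⁿ⁻ⁱ` under the linear map `Kʲ ↦ j!`, and both equations become identities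
between elementary symmetric functions of `n` variables with sum `n + 1`, respectively `n`.
-/

open scoped Nat

section ElementarySymmetric

variable {ι R : Type*}

theorem esymm_cons_succ [CommSemiring R] (a : R) (s : Multiset R) (i : ℕ) :
    (a ::ₘ s).esymm (i + 1) = s.esymm (i + 1) + a * s.esymm i := by
  simp [Multiset.esymm, Multiset.powersetCard_cons, Multiset.sum_map_mul_left]

theorem esymm_one_eq_sum [CommSemiring R] (s : Multiset R) : s.esymm 1 = s.sum := by
  simp [Multiset.esymm, Multiset.powersetCard_one]

theorem esymm_eq_zero_of_card_lt [CommSemiring R] {s : Multiset R} {i : ℕ}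
    (h : s.card < i) : s.esymm i = 0 := by
  simp [Multiset.esymm, Multiset.powersetCard_eq_empty i h]

variable [DecidableEq ι] [CommRing R]

theorem mul_prod_update_sub_one (s : Finset ι) (x : ι → R) (j : ι) :
    x j * ∏ l ∈ s, Function.update x j (x j - 1) l =
      x j * ∏ l ∈ s, x l - if j ∈ s then ∏ l ∈ s, x l else 0 := by
  split_ifs with hj
  · rw [prod_update_of_mem hj, sdiff_singleton_eq_erase, ← mul_prod_erase s x hj]
    ring
  · rw [prod_update_of_notMem hj, sub_zero]

/- Each monomial `∏ l ∈ t, x l` of `eᵢ` occurs `∑ x` times in the first term of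
`mul_prod_update_sub_one` and once for each of the `i` elements of `t` in the second. -/
theorem sum_mul_esymm_update_sub_one (s : Finset ι) (x : ι → R) (i : ℕ) :
    ∑ j ∈ s, x j * (s.val.map (Function.update x j (x j - 1))).esymm i =
      (∑ j ∈ s, x j - i) * (s.val.map x).esymm i := by
  simp_rw [esymm_map_val, mul_sum]
  rw [sum_comm]
  refine sum_congr rfl fun t ht => ?_
  obtain ⟨hts, hcard⟩ := mem_powersetCard.1 ht
  simp_rw [mul_prod_update_sub_one]
  rw [sum_sub_distrib, ← sum_mul, sum_ite_mem, inter_eq_right.2 hts, sum_const, hcard,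
    nsmul_eq_mul, sub_mul]

end ElementarySymmetric

section Numerator

variable {ι R : Type*} [CommRing R]

/-- The factor `r! - ∑_{i=2}^r (i-2)! (r-i)! e_i(s)` of `α_r(s)`, for a multiset `s` of size `r` in
a commutative ring. The summation index is shifted by two. -/
def alphaNumerator (s : Multiset R) : R :=
  (s.card)! - ∑ i ∈ range (s.card - 1), (i ! * (s.card - 2 - i)! : ℕ) * s.esymm (i + 2)

theorem alphaNumerator_zero_cons (s : Multiset R) :
    alphaNumerator (0 ::ₘ s) =
      (s.card + 1)! -
        ∑ i ∈ range (s.card - 1), (i ! * (s.card - 1 - i)! : ℕ) * s.esymm (i + 2) := by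
  simp only [alphaNumerator, Multiset.card_cons, esymm_cons_succ, zero_mul, add_zero,
    Nat.add_sub_cancel, Nat.reduceSubDiff]
  congr 1
  refine (sum_subset (range_mono (Nat.sub_le _ _)) fun i _ hi => ?_).symm
  rw [esymm_eq_zero_of_card_lt (by grind), mul_zero]

theorem factorial_mul_factorial_succ_add (i d : ℕ) :
    i ! * (d + 1)! + (i + 1)! * d ! = (i + d + 2) * (i ! * d !) := by
  simp only [Nat.factorial_succ]
  ring

theorem alphaNumerator_one_cons {s : Multiset R} (hs : s ≠ 0) (hsum : s.sum = s.card) :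
    alphaNumerator (1 ::ₘ s) = s.card • alphaNumerator s := by
  obtain ⟨k, hk⟩ := Nat.exists_eq_succ_of_ne_zero (mt Multiset.card_eq_zero.1 hs)
  have hcoeff (i : ℕ) (hi : i < k) :
      i ! * (k - i)! + (i + 1)! * (k - (i + 1))! = (k + 1) * (i ! * (k - 1 - i)!) := by
    obtain ⟨d, rfl⟩ := Nat.exists_eq_add_of_lt hi
    rw [show i + d + 1 - i = d + 1 by lia, show i + d + 1 - (i + 1) = d by lia,
      show i + d + 1 - 1 - i = d by lia, factorial_mul_factorial_succ_add]
  have hsplit : ∑ i ∈ range (k + 1), (i ! * (k - i)! : ℕ) * (s.esymm (i + 2) + s.esymm (i + 1)) =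
      (k + 1) * ∑ i ∈ range k, (i ! * (k - 1 - i)! : ℕ) * s.esymm (i + 2) + (k + 1)! := by
    calc
      _ = ∑ i ∈ range k, (i ! * (k - i)! : ℕ) * s.esymm (i + 2) +
          (∑ i ∈ range k, ((i + 1)! * (k - (i + 1))! : ℕ) * s.esymm (i + 2) +
            k ! * s.esymm 1) := by
        simp_rw [mul_add, sum_add_distrib]
        rw [sum_range_succ, esymm_eq_zero_of_card_lt (by lia), sum_range_succ' _ k]
        simp
      _ = _ := by
        rw [← add_assoc, ← sum_add_distrib, esymm_one_eq_sum, hsum, hk, mul_sum]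
        congr 1
        · refine sum_congr rfl fun i hi => ?_
          rw [← add_mul, ← Nat.cast_add, hcoeff i (mem_range.1 hi)]
          push_cast
          ring
        · rw [← Nat.cast_mul, mul_comm, ← Nat.factorial_succ]
  simp only [alphaNumerator, Multiset.card_cons, hk, esymm_cons_succ, one_mul,
    Nat.succ_eq_add_one, Nat.add_sub_cancel, Nat.reduceSubDiff, nsmul_eq_mul]
  rw [hsplit, Nat.factorial_succ (k + 1)]
  push_cast
  ring

theorem sum_mul_alphaNumerator_update_sub_one [DecidableEq ι] (s : Finset ι) (x : ι → R)
    (hsum : ∑ j ∈ s, x j = #s + 1) :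
    ∑ j ∈ s, x j * alphaNumerator (s.val.map (Function.update x j (x j - 1))) =
      alphaNumerator (0 ::ₘ s.val.map x) := by
  have hcoeff (i : ℕ) (hi : i < #s - 1) :
      ((i ! * (#s - 2 - i)! : ℕ) : R) * (∑ j ∈ s, x j - (i + 2 : ℕ)) =
        (i ! * (#s - 1 - i)! : ℕ) := by
    obtain ⟨d, hd⟩ := Nat.exists_eq_add_of_lt hi
    rw [hsum, show #s = i + d + 2 by lia, show i + d + 2 - 2 - i = d by lia,
      show i + d + 2 - 1 - i = d + 1 by lia, Nat.factorial_succ]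
    push_cast
    ring
  rw [alphaNumerator_zero_cons]
  simp only [alphaNumerator, Multiset.card_map, card_val, mul_sub, sum_sub_distrib]
  congr 1
  · rw [← sum_mul, hsum, Nat.factorial_succ, Nat.cast_mul, Nat.cast_succ]
  · simp_rw [mul_sum, mul_left_comm (x _)]
    rw [sum_comm]
    refine sum_congr rfl fun i hi => ?_
    rw [← mul_sum, sum_mul_esymm_update_sub_one, ← mul_assoc, hcoeff i (mem_range.1 hi)]

end Numerator

section Coefficient

theorem univ_val_map_apply_cons {α β : Type*} {n : ℕ} (f : α → β) (a : α) (m : Fin n → α) :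
    (univ.val.map fun l => f (Fin.cons (α := fun _ => α) a m l)) =
      f a ::ₘ univ.val.map fun l => f (m l) := by
  simp [Fin.univ_val_map, List.ofFn_succ]

theorem prod_factorial_eq_mul_prod_factorial_update {ι : Type*} [DecidableEq ι] {s : Finset ι}
    {j : ι} (hj : j ∈ s) {m : ι → ℕ} (hm : m j ≠ 0) :
    ∏ l ∈ s, (m l)! = m j * ∏ l ∈ s, (Function.update m j (m j - 1) l)! := by
  simp_rw [Function.apply_update fun _ => Nat.factorial]
  rw [prod_update_of_mem hj, ← mul_assoc, Nat.mul_factorial_pred hm, sdiff_singleton_eq_erase,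
    mul_prod_erase s (fun l => (m l)!) hj]

theorem alphaCoeff_eq_alphaNumerator_div (r : ℕ) (y : Fin r → ℕ) :
    alphaCoeff r y =
      alphaNumerator (univ.val.map fun l => (y l : ℚ)) / (24 * ∏ l, ((y l)! : ℚ)) := by
  have hsum : ∑ i ∈ Icc 2 r, ((i - 2)! : ℚ) * (r - i)! * esymmQ r i y =
      ∑ i ∈ range (r - 1), ((i ! * (r - 2 - i)! : ℕ) : ℚ) *
        (univ.val.map fun l => (y l : ℚ)).esymm (i + 2) := by
    rw [← Ico_add_one_right_eq_Icc, sum_Ico_eq_sum_range]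
    refine sum_congr (by simp) fun i _ => ?_
    rw [esymm_map_val, esymmQ, Nat.add_sub_cancel_left, Nat.sub_sub, add_comm 2 i, Nat.cast_mul]
  rw [alphaCoeff, hsum, one_div_mul_eq_div]
  simp [alphaNumerator]

theorem alphaCoeff_comp_perm (r : ℕ) (y : Fin r → ℕ) (σ : Equiv.Perm (Fin r)) :
    alphaCoeff r (y ∘ σ) = alphaCoeff r y := by
  have hmap : (univ.val.map fun l => (y (σ l) : ℚ)) = univ.val.map fun l => (y l : ℚ) := by
    conv_rhs => rw [← Multiset.map_univ_val_equiv σ, Multiset.map_map]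
    rfl
  simp only [alphaCoeff_eq_alphaNumerator_div, Function.comp_apply, hmap,
    Equiv.prod_comp σ fun l => ((y l)! : ℚ)]

theorem alphaCoeff_cons_one {n : ℕ} (hn : 1 ≤ n) (m : Fin n → ℕ) (hm : ∑ i, m i = n) :
    alphaCoeff (n + 1) (Fin.cons 1 m) = n • alphaCoeff n m := by
  rw [alphaCoeff_eq_alphaNumerator_div, alphaCoeff_eq_alphaNumerator_div,
    univ_val_map_apply_cons Nat.cast, Nat.cast_one]
  set s := univ.val.map fun l => (m l : ℚ) with hs
  have hcard : s.card = n := by simp [hs]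
  have hne : s ≠ 0 := Multiset.card_pos.1 (hcard ▸ hn)
  have hsum : s.sum = s.card := by rw [hcard, hs, sum_map_val, ← Nat.cast_sum, hm]
  rw [alphaNumerator_one_cons hne hsum, hcard, smul_div_assoc]
  simp [Fin.prod_univ_succ]

theorem alphaCoeff_update_sub_one {n : ℕ} (m : Fin n → ℕ) {j : Fin n} (hj : 1 ≤ m j) :
    alphaCoeff n (Function.update m j (m j - 1)) =
      m j * alphaNumerator
        (univ.val.map (Function.update (fun l => (m l : ℚ)) j (m j - 1))) /
        (24 * ∏ l, ((m l)! : ℚ)) := by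
  have hcast : (fun l => (Function.update m j (m j - 1) l : ℚ)) =
      Function.update (fun l => (m l : ℚ)) j (m j - 1) := by
    rw [← Nat.cast_pred hj]
    exact Function.comp_update _ m j _
  have hm : (m j : ℚ) ≠ 0 := by positivity
  have hfact : ∏ l, ((m l)! : ℚ) = m j * ∏ l, ((Function.update m j (m j - 1) l)! : ℚ) := by
    exact_mod_cast prod_factorial_eq_mul_prod_factorial_update (mem_univ j) (by lia)
  rw [alphaCoeff_eq_alphaNumerator_div, hcast, hfact, mul_left_comm 24, mul_div_mul_left _ _ hm]

theorem alphaCoeff_cons_zero {n : ℕ} (m : Fin n → ℕ) (hm : ∑ i, m i = n + 1) :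
    alphaCoeff (n + 1) (Fin.cons 0 m) =
      ∑ j : Fin n, if 1 ≤ m j then alphaCoeff n (Function.update m j (m j - 1)) else 0 := by
  have hsum : ∑ j, (m j : ℚ) = #(univ : Finset (Fin n)) + 1 := by
    rw [← Nat.cast_sum, hm, card_fin, Nat.cast_succ]
  rw [alphaCoeff_eq_alphaNumerator_div, univ_val_map_apply_cons Nat.cast, Nat.cast_zero,
    ← sum_mul_alphaNumerator_update_sub_one _ _ hsum, sum_div]
  refine sum_congr rfl fun j _ => ?_
  split_ifs with hj
  · rw [alphaCoeff_update_sub_one m hj]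
    simp [Fin.prod_univ_succ]
  · simp [show m j = 0 by lia]

theorem alphaCoeff_one_const_one : alphaCoeff 1 (fun _ => 1) = 1 / 24 := by
  simp [alphaCoeff]

end Coefficient

section Uniqueness

/-- The defining properties of genus-one intersection numbers, up to normalization: symmetry, and
the string and dilaton equations for the tuples `(0, m)` and `(1, m)` whose sum equals their number
of entries, the degree in which the intersection numbers live. -/
structure IsStringDilatonFamily {M : Type*} [AddCommMonoid M]
    (T : ∀ n : ℕ, (Fin n → ℕ) → M) : Prop where
  symm : ∀ n, 1 ≤ n → ∀ σ : Equiv.Perm (Fin n), ∀ m : Fin n → ℕ, T n (m ∘ σ) = T n m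
  string : ∀ n, 1 ≤ n → ∀ m : Fin n → ℕ, ∑ i, m i = n + 1 →
    T (n + 1) (Fin.cons 0 m) =
      ∑ j : Fin n, if 1 ≤ m j then T n (Function.update m j (m j - 1)) else 0
  dilaton : ∀ n, 1 ≤ n → ∀ m : Fin n → ℕ, ∑ i, m i = n → T (n + 1) (Fin.cons 1 m) = n • T n m

theorem isStringDilatonFamily_alphaCoeff : IsStringDilatonFamily alphaCoeff where
  symm n _ σ m := alphaCoeff_comp_perm n m σ
  string _ _ m hm := alphaCoeff_cons_zero m hm
  dilaton _ hn m hm := alphaCoeff_cons_one hn m hm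

theorem exists_perm_comp_eq_cons {α : Type*} {n : ℕ} (m : Fin (n + 1) → α) (i : Fin (n + 1)) :
    ∃ (σ : Equiv.Perm (Fin (n + 1))) (y : Fin n → α), m ∘ σ = Fin.cons (m i) y := by
  refine ⟨Equiv.swap 0 i, Fin.tail (m ∘ Equiv.swap 0 i), ?_⟩
  rw [← Fin.cons_self_tail (m ∘ Equiv.swap 0 i)]
  simp

theorem sum_update_sub_one {ι : Type*} [DecidableEq ι] {s : Finset ι} {m : ι → ℕ} {j : ι}
    (hj : j ∈ s) (hm : 1 ≤ m j) :
    ∑ i ∈ s, Function.update m j (m j - 1) i = ∑ i ∈ s, m i - 1 := by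
  rw [sum_update_of_mem hj, sdiff_singleton_eq_erase, ← add_sum_erase s m hj]
  lia

theorem IsStringDilatonFamily.eq_of_eq_one {M : Type*} [AddCommMonoid M]
    {T U : ∀ n : ℕ, (Fin n → ℕ) → M} (hT : IsStringDilatonFamily T)
    (hU : IsStringDilatonFamily U) (h : T 1 (fun _ => 1) = U 1 (fun _ => 1))
    {n : ℕ} (hn : 1 ≤ n) (m : Fin n → ℕ) (hm : ∑ i, m i = n) : T n m = U n m := by
  induction n, hn using Nat.le_induction with
  | base =>
    obtain rfl : m = fun _ => 1 := by
      funext i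
      rwa [Subsingleton.elim i 0, ← Fin.sum_univ_one m]
    exact h
  | succ n hn ih =>
    obtain ⟨i, -, hi⟩ : ∃ i ∈ univ, m i ≤ 1 := exists_le_of_sum_le univ_nonempty (by simp [hm])
    obtain ⟨σ, y, hy⟩ := exists_perm_comp_eq_cons m i
    have hsum : m i + ∑ j, y j = n + 1 := by
      rw [← hm, ← Equiv.sum_comp σ m, ← Fin.sum_cons, ← hy]
      rfl
    rw [← hT.symm (n + 1) n.succ_pos σ, ← hU.symm (n + 1) n.succ_pos σ, hy]
    obtain h0 | h1 := Nat.le_one_iff_eq_zero_or_eq_one.1 hi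
    · have hysum : ∑ j, y j = n + 1 := by lia
      rw [h0, hT.string n hn y hysum, hU.string n hn y hysum]
      refine sum_congr rfl fun j _ => if_ctx_congr Iff.rfl (fun hj => ?_) fun _ => rfl
      exact ih _ (by rw [sum_update_sub_one (mem_univ j) hj, hysum, Nat.add_sub_cancel])
    · have hysum : ∑ j, y j = n := by lia
      rw [h1, hT.dilaton n hn y hysum, hU.dilaton n hn y hysum, ih y hysum]

end Uniqueness

/-- **Genus-one intersection numbers are determined by the string and dilaton
equations.**  If a family `T` of symmetric functions `T n : ℕ^n → ℚ` (for `n ≥ 1`)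
satisfies `T 1 (1) = 1/24`, the string equation and the dilaton equation, then for
every `n ≥ 1` and every tuple `(m_1,…,m_n)` with `m_1 + ⋯ + m_n = n` one has
`T n (m_1,…,m_n) = α_n(m_1,…,m_n)`. -/
theorem genus_one_intersection_numbers
    (T : ∀ n : ℕ, (Fin n → ℕ) → ℚ)
    (hsymm : ∀ n, 1 ≤ n → ∀ σ : Equiv.Perm (Fin n), ∀ m : Fin n → ℕ,
      T n (m ∘ σ) = T n m)
    (hinit : T 1 (fun _ => 1) = 1 / 24)
    (hstring : ∀ n, 1 ≤ n → ∀ m : Fin n → ℕ,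
      T (n + 1) (Fin.cons 0 m) =
        ∑ j : Fin n, if 1 ≤ m j then T n (Function.update m j (m j - 1)) else 0)
    (hdilaton : ∀ n, 1 ≤ n → ∀ m : Fin n → ℕ,
      T (n + 1) (Fin.cons 1 m) = (n : ℚ) * T n m)
    (n : ℕ) (hn : 1 ≤ n) (m : Fin n → ℕ) (hm : ∑ i, m i = n) :
    T n m = alphaCoeff n m := by
  have hT : IsStringDilatonFamily T :=
    { symm := hsymm
      string := fun n hn m _ => hstring n hn m
      dilaton := fun n hn m _ => by rw [hdilaton n hn, nsmul_eq_mul] }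
  exact hT.eq_of_eq_one isStringDilatonFamily_alphaCoeff
    (hinit.trans alphaCoeff_one_const_one.symm) hn m hm
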